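/- arXiv:2503.10251 — 2 statements merged into one kernel-verified Lean document; each statement's English description precedes it below -/
import Mathlib

section
/- Let s ∈ ℝ^n be nonzero and β > 0. For every ŝ ∈ ℝ^n with ρ_c(ŝ, s) ≤ β, the floating-point evaluation of the softmax at ŝ satisfies, for all sufficiently small u and ρ_c(ŝ, s): ρ_c( fl(ψ(ŝ)), ψ(s) ) ≤ (n + 3) u + 2‖s‖_∞ ρ_c(ŝ, s) + C·(u² + ρ_c(ŝ, s)²) for a constant C independent of u and ŝ. -/
open scoped BigOperators ENNReal

noncomputable section

namespace TR

/-! ### Norms and basic quantities -/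

/-- Euclidean (ℓ₂) norm of a vector. -/
def l2 {d : ℕ} (x : Fin d → ℝ) : ℝ := Real.sqrt (∑ i, x i ^ 2)

/-- ℓ_∞ norm of a vector. -/
def linf {d : ℕ} (x : Fin d → ℝ) : ℝ := ⨆ i, |x i|

/-- "ℓ_{−∞}" functional: the minimal absolute value of the entries. -/
def lminf {d : ℕ} (x : Fin d → ℝ) : ℝ := ⨅ i, |x i|

/-- ℓ₁ norm of a vector. -/
def l1 {d : ℕ} (x : Fin d → ℝ) : ℝ := ∑ i, |x i|

/-- γ_k = k u / (1 − k u). -/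
def gam (k : ℕ) (u : ℝ) : ℝ := (k : ℝ) * u / (1 - (k : ℝ) * u)

/-- entrywise absolute value of a matrix. -/
def matAbs {a b : ℕ} (B : Matrix (Fin a) (Fin b) ℝ) : Matrix (Fin a) (Fin b) ℝ :=
  Matrix.of fun i j => |B i j|

/-- largest singular value: supremum of ‖Bx‖₂ over ℓ₂-unit vectors. -/
def sigmaMax {d : ℕ} (B : Matrix (Fin d) (Fin d) ℝ) : ℝ :=
  ⨆ x : {x : Fin d → ℝ // l2 x = 1}, l2 (fun i => ∑ j, B i j * x.1 j)

/-- smallest singular value: infimum of ‖Bx‖₂ over ℓ₂-unit vectors. -/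
def sigmaMin {d : ℕ} (B : Matrix (Fin d) (Fin d) ℝ) : ℝ :=
  ⨅ x : {x : Fin d → ℝ // l2 x = 1}, l2 (fun i => ∑ j, B i j * x.1 j)

/-- matrix (1,∞) operator norm: max of absolute values of entries. -/
def norm1inf {a b : ℕ} (B : Matrix (Fin a) (Fin b) ℝ) : ℝ := ⨆ p : Fin a × Fin b, |B p.1 p.2|

/-- matrix (∞,∞) operator norm: max row ℓ₁ norm. -/
def norminfinf {a b : ℕ} (B : Matrix (Fin a) (Fin b) ℝ) : ℝ := ⨆ i, ∑ j, |B i j|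

/-- matrix (1,1) operator norm: max column ℓ₁ norm. -/
def norm11 {a b : ℕ} (B : Matrix (Fin a) (Fin b) ℝ) : ℝ := ⨆ j, ∑ i, |B i j|

/-! ### Componentwise relative distance -/

/-- Componentwise relative distance between vectors, with the conventions
`t/0 = ∞` for `t ≠ 0` and `0/0 = 0`. -/
def rhoV {d : ℕ} (xh x : Fin d → ℝ) : ℝ≥0∞ :=
  ⨆ i, (if x i = 0 then (if xh i = 0 then (0 : ℝ≥0∞) else ⊤)
        else ENNReal.ofReal (|xh i - x i| / |x i|))

/-- Componentwise relative distance between matrices given by their columns. -/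
def rhoM {d n : ℕ} (Xh X : Fin n → Fin d → ℝ) : ℝ≥0∞ := ⨆ t, rhoV (Xh t) (X t)

/-! ### Exact transformer components -/

/-- RMS layer normalization `R(x) = √d · x / ‖x‖₂`. -/
def rmsN {d : ℕ} (x : Fin d → ℝ) : Fin d → ℝ := fun i => Real.sqrt d * x i / l2 x

/-- sample mean. -/
def meanv {d : ℕ} (x : Fin d → ℝ) : ℝ := (∑ i, x i) / d

/-- centring `c̊(x) = x − μ(x) e`. -/
def centr {d : ℕ} (x : Fin d → ℝ) : Fin d → ℝ := fun i => x i - meanv x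

/-- layer normalization `N(x) = √d · c̊(x)/‖c̊(x)‖₂ = (x − μ(x)e)/√ν(x)`. -/
def layerN {d : ℕ} (x : Fin d → ℝ) : Fin d → ℝ := rmsN (centr x)

/-- softmax. -/
def softmax {m : ℕ} (s : Fin m → ℝ) : Fin m → ℝ :=
  fun i => Real.exp (s i) / ∑ j, Real.exp (s j)

/-- affine map `x ↦ A x + b`. -/
def affine {k m : ℕ} (A : Matrix (Fin k) (Fin m) ℝ) (b : Fin k → ℝ) (x : Fin m → ℝ) :
    Fin k → ℝ :=
  fun i => (∑ j, A i j * x j) + b i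

/-- two-layer perceptron `M = L₂ ∘ ReLU ∘ L₁`. -/
def tlp {d D : ℕ} (A1 : Matrix (Fin D) (Fin d) ℝ) (b1 : Fin D → ℝ)
    (A2 : Matrix (Fin d) (Fin D) ℝ) (b2 : Fin d → ℝ) (x : Fin d → ℝ) : Fin d → ℝ :=
  affine A2 b2 (fun i => max 0 (affine A1 b1 x i))

/-- the matrix of the first `t+1` columns of `X` (columns are `X 0, …, X t`). -/
def prefixCols {d n : ℕ} (X : Fin n → Fin d → ℝ) (t : Fin n) : Fin (t.1 + 1) → Fin d → ℝ :=
  fun i => X (Fin.castLE t.isLt i)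

/-- similarity scores `S(Z) = (1/√d) (W_k Z)ᵀ (W_q z_last)`. -/
def simScores {d m : ℕ} (Wq Wk : Matrix (Fin d) (Fin d) ℝ)
    (Z : Fin (m + 1) → Fin d → ℝ) : Fin (m + 1) → ℝ :=
  fun i => (1 / Real.sqrt d) * ∑ a, (∑ b, Wk a b * Z i b) * (∑ b, Wq a b * Z (Fin.last m) b)

/-- masked single-head self-attention: the `t`-th column of `A(X)` is
`W_v X_t ψ(S(X_t))`. -/
def attn {d n : ℕ} (Wq Wk Wv : Matrix (Fin d) (Fin d) ℝ) (X : Fin n → Fin d → ℝ) :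
    Fin n → Fin d → ℝ :=
  fun t i => ∑ a, Wv i a * ∑ j : Fin (t.1 + 1),
    softmax (simScores Wq Wk (prefixCols X t)) j * prefixCols X t j a

/-- transformer configuration. -/
structure Config (d D : ℕ) where
  A1 : Matrix (Fin D) (Fin d) ℝ
  b1 : Fin D → ℝ
  A2 : Matrix (Fin d) (Fin D) ℝ
  b2 : Fin d → ℝ
  Wq : Matrix (Fin d) (Fin d) ℝ
  Wk : Matrix (Fin d) (Fin d) ℝ
  Wv : Matrix (Fin d) (Fin d) ℝ

/-- transformer block with RMS layer normalization
`Q_Θ = (Id + M* ∘ R*) ∘ (Id + A ∘ R*)`. -/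
def Qblock {d D n : ℕ} (c : Config d D) (X : Fin n → Fin d → ℝ) : Fin n → Fin d → ℝ :=
  let Y : Fin n → Fin d → ℝ :=
    fun t i => X t i + attn c.Wq c.Wk c.Wv (fun s => rmsN (X s)) t i
  fun t i => Y t i + tlp c.A1 c.b1 c.A2 c.b2 (rmsN (Y t)) i

/-- transformer block with layer normalization
`T_Θ = (Id + M* ∘ N*) ∘ (Id + A ∘ N*)`. -/
def Tblock {d D n : ℕ} (c : Config d D) (X : Fin n → Fin d → ℝ) : Fin n → Fin d → ℝ :=
  let Y : Fin n → Fin d → ℝ :=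
    fun t i => X t i + attn c.Wq c.Wk c.Wv (fun s => layerN (X s)) t i
  fun t i => Y t i + tlp c.A1 c.b1 c.A2 c.b2 (layerN (Y t)) i

/-! ### Floating-point model -/

/-- `a` is the rounded value of `b`: `a = b (1+δ)`, `|δ| ≤ u`. -/
def Fp (u a b : ℝ) : Prop := ∃ δ : ℝ, |δ| ≤ u ∧ a = b * (1 + δ)

/-- recursive summation of a list in floating-point arithmetic. -/
inductive FlSumL (u : ℝ) : List ℝ → ℝ → Prop
  | nil : FlSumL u [] 0
  | single (x : ℝ) : FlSumL u [x] x
  | cons (x y : ℝ) (l : List ℝ) (s r : ℝ) :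
      FlSumL u (y :: l) s → Fp u r (x + s) → FlSumL u (x :: y :: l) r

/-- recursive summation of the values of a finite family. -/
def FlSum (u : ℝ) {m : ℕ} (f : Fin m → ℝ) (r : ℝ) : Prop := FlSumL u (List.ofFn f) r

/-- floating-point inner product: rounded products, recursive summation. -/
def FlDot (u : ℝ) {m : ℕ} (x y : Fin m → ℝ) (r : ℝ) : Prop :=
  ∃ p : Fin m → ℝ, (∀ i, Fp u (p i) (x i * y i)) ∧ FlSum u p r

/-- floating-point matrix-vector product. -/
def FlMulVec (u : ℝ) {k m : ℕ} (A : Matrix (Fin k) (Fin m) ℝ) (x : Fin m → ℝ)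
    (r : Fin k → ℝ) : Prop :=
  ∀ i, FlDot u (A i) x (r i)

/-- floating-point evaluation of `x ↦ Ax + b`. -/
def FlAffine (u : ℝ) {k m : ℕ} (A : Matrix (Fin k) (Fin m) ℝ) (b : Fin k → ℝ)
    (x : Fin m → ℝ) (r : Fin k → ℝ) : Prop :=
  ∃ w : Fin k → ℝ, FlMulVec u A x w ∧ ∀ i, Fp u (r i) (w i + b i)

/-- floating-point evaluation of the two-layer perceptron (ReLU is exact). -/
def FlTLP (u : ℝ) {d D : ℕ} (A1 : Matrix (Fin D) (Fin d) ℝ) (b1 : Fin D → ℝ)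
    (A2 : Matrix (Fin d) (Fin D) ℝ) (b2 : Fin d → ℝ) (x : Fin d → ℝ) (r : Fin d → ℝ) : Prop :=
  ∃ w : Fin D → ℝ, FlAffine u A1 b1 x w ∧ FlAffine u A2 b2 (fun i => max 0 (w i)) r

/-- floating-point evaluation of the Euclidean norm: squares, recursive
summation, square root. -/
def FlL2 (u : ℝ) {m : ℕ} (x : Fin m → ℝ) (r : ℝ) : Prop :=
  ∃ sq : Fin m → ℝ, (∀ i, Fp u (sq i) (x i * x i)) ∧
    ∃ s : ℝ, FlSum u sq s ∧ Fp u r (Real.sqrt s)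

/-- floating-point evaluation of the RMS layer normalization. -/
def FlRMS (u : ℝ) {d : ℕ} (x : Fin d → ℝ) (r : Fin d → ℝ) : Prop :=
  ∃ nrm : ℝ, FlL2 u x nrm ∧
    ∀ i, ∃ t : ℝ, Fp u t (Real.sqrt d * x i) ∧ Fp u (r i) (t / nrm)

/-- floating-point evaluation of the centring. -/
def FlCentr (u : ℝ) {d : ℕ} (x : Fin d → ℝ) (r : Fin d → ℝ) : Prop :=
  ∃ s m : ℝ, FlSum u x s ∧ Fp u m (s / (d : ℝ)) ∧ ∀ i, Fp u (r i) (x i - m)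

/-- floating-point evaluation of the layer normalization: centring followed by
RMS normalization of the centred vector. -/
def FlLN (u : ℝ) {d : ℕ} (x : Fin d → ℝ) (r : Fin d → ℝ) : Prop :=
  ∃ c : Fin d → ℝ, FlCentr u x c ∧ FlRMS u c r

/-- floating-point evaluation of the softmax. -/
def FlSoftmax (u : ℝ) {m : ℕ} (s : Fin m → ℝ) (r : Fin m → ℝ) : Prop :=
  ∃ ex : Fin m → ℝ, (∀ i, Fp u (ex i) (Real.exp (s i))) ∧
    ∃ tot : ℝ, FlSum u ex tot ∧ ∀ i, Fp u (r i) (ex i / tot)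

/-- floating-point evaluation of the similarity scores. -/
def FlSim (u : ℝ) {d m : ℕ} (Wq Wk : Matrix (Fin d) (Fin d) ℝ)
    (Z : Fin (m + 1) → Fin d → ℝ) (r : Fin (m + 1) → ℝ) : Prop :=
  ∃ q : Fin d → ℝ, FlMulVec u Wq (Z (Fin.last m)) q ∧
    ∀ i, ∃ kv : Fin d → ℝ, ∃ dp : ℝ, FlMulVec u Wk (Z i) kv ∧ FlDot u q kv dp ∧
      Fp u (r i) (dp / Real.sqrt d)

/-- floating-point evaluation of the self-attention. -/
def FlAttn (u : ℝ) {d n : ℕ} (Wq Wk Wv : Matrix (Fin d) (Fin d) ℝ)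
    (X : Fin n → Fin d → ℝ) (r : Fin n → Fin d → ℝ) : Prop :=
  ∀ t : Fin n, ∃ s psi : Fin (t.1 + 1) → ℝ, ∃ z : Fin d → ℝ,
    FlSim u Wq Wk (prefixCols X t) s ∧ FlSoftmax u s psi ∧
    (∀ a : Fin d, FlDot u (fun j => prefixCols X t j a) psi (z a)) ∧
    FlMulVec u Wv z (r t)

/-- floating-point evaluation of `X ↦ X + A(R*(X))`. -/
def FlResAttnRMS (u : ℝ) {d n : ℕ} (Wq Wk Wv : Matrix (Fin d) (Fin d) ℝ)
    (X r : Fin n → Fin d → ℝ) : Prop :=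
  ∃ RX G : Fin n → Fin d → ℝ, (∀ t, FlRMS u (X t) (RX t)) ∧ FlAttn u Wq Wk Wv RX G ∧
    ∀ t i, Fp u (r t i) (X t i + G t i)

/-- floating-point evaluation of `X ↦ X + A(N*(X))`. -/
def FlResAttnLN (u : ℝ) {d n : ℕ} (Wq Wk Wv : Matrix (Fin d) (Fin d) ℝ)
    (X r : Fin n → Fin d → ℝ) : Prop :=
  ∃ NX G : Fin n → Fin d → ℝ, (∀ t, FlLN u (X t) (NX t)) ∧ FlAttn u Wq Wk Wv NX G ∧
    ∀ t i, Fp u (r t i) (X t i + G t i)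

/-- floating-point evaluation of `x ↦ x + M(R(x))`. -/
def FlResTlpRMS (u : ℝ) {d D : ℕ} (A1 : Matrix (Fin D) (Fin d) ℝ) (b1 : Fin D → ℝ)
    (A2 : Matrix (Fin d) (Fin D) ℝ) (b2 : Fin d → ℝ) (x r : Fin d → ℝ) : Prop :=
  ∃ rx m : Fin d → ℝ, FlRMS u x rx ∧ FlTLP u A1 b1 A2 b2 rx m ∧
    ∀ i, Fp u (r i) (x i + m i)

/-- floating-point evaluation of `x ↦ x + M(N(x))`. -/
def FlResTlpLN (u : ℝ) {d D : ℕ} (A1 : Matrix (Fin D) (Fin d) ℝ) (b1 : Fin D → ℝ)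
    (A2 : Matrix (Fin d) (Fin D) ℝ) (b2 : Fin d → ℝ) (x r : Fin d → ℝ) : Prop :=
  ∃ nx m : Fin d → ℝ, FlLN u x nx ∧ FlTLP u A1 b1 A2 b2 nx m ∧
    ∀ i, Fp u (r i) (x i + m i)

/-- floating-point evaluation of the transformer block with RMS normalization. -/
def FlQBlock (u : ℝ) {d D n : ℕ} (c : Config d D) (X R : Fin n → Fin d → ℝ) : Prop :=
  ∃ RX G Y RY M : Fin n → Fin d → ℝ,
    (∀ t, FlRMS u (X t) (RX t)) ∧
    FlAttn u c.Wq c.Wk c.Wv RX G ∧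
    (∀ t i, Fp u (Y t i) (X t i + G t i)) ∧
    (∀ t, FlRMS u (Y t) (RY t)) ∧
    (∀ t, FlTLP u c.A1 c.b1 c.A2 c.b2 (RY t) (M t)) ∧
    (∀ t i, Fp u (R t i) (Y t i + M t i))

/-- floating-point evaluation of the transformer block with layer
normalization. -/
def FlTBlock (u : ℝ) {d D n : ℕ} (c : Config d D) (X R : Fin n → Fin d → ℝ) : Prop :=
  ∃ NX G Y NY M : Fin n → Fin d → ℝ,
    (∀ t, FlLN u (X t) (NX t)) ∧
    FlAttn u c.Wq c.Wk c.Wv NX G ∧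
    (∀ t i, Fp u (Y t i) (X t i + G t i)) ∧
    (∀ t, FlLN u (Y t) (NY t)) ∧
    (∀ t, FlTLP u c.A1 c.b1 c.A2 c.b2 (NY t) (M t)) ∧
    (∀ t i, Fp u (R t i) (Y t i + M t i))

/-- floating-point evaluation of a deep transformer with RMS normalization. -/
def FlQDeep (u : ℝ) {d D n L : ℕ} (cfg : Fin L → Config d D)
    (X R : Fin n → Fin d → ℝ) : Prop :=
  ∃ Z : Fin (L + 1) → Fin n → Fin d → ℝ, Z 0 = X ∧ Z (Fin.last L) = R ∧
    ∀ l : Fin L, FlQBlock u (cfg l) (Z l.castSucc) (Z l.succ)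

/-- floating-point evaluation of a deep transformer with layer normalization. -/
def FlTDeep (u : ℝ) {d D n L : ℕ} (cfg : Fin L → Config d D)
    (X R : Fin n → Fin d → ℝ) : Prop :=
  ∃ Z : Fin (L + 1) → Fin n → Fin d → ℝ, Z 0 = X ∧ Z (Fin.last L) = R ∧
    ∀ l : Fin L, FlTBlock u (cfg l) (Z l.castSucc) (Z l.succ)

/-! ### Condition numbers and amplification factors -/

/-- componentwise condition number of a vector-valued map. -/
def kccV {d k : ℕ} (f : (Fin d → ℝ) → (Fin k → ℝ)) (x : Fin d → ℝ) : ℝ :=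
  ⨆ i, (∑ j, |fderiv ℝ f x (Pi.single j 1) i * x j|) / |f x i|

/-- componentwise condition number of a matrix-valued map (matrices given by
their columns). -/
def kccM {d n : ℕ} (f : (Fin n → Fin d → ℝ) → (Fin n → Fin d → ℝ))
    (X : Fin n → Fin d → ℝ) : ℝ :=
  ⨆ p : Fin n × Fin d, (∑ q : Fin n × Fin d,
      |fderiv ℝ f X (Pi.single q.1 (Pi.single q.2 1)) p.1 p.2 * X q.1 q.2|) / |f X p.1 p.2|

/-- cancellation factor of a residual connection, vector version. -/
def xiResV {d : ℕ} (x g : Fin d → ℝ) : ℝ := ⨆ i, (|x i| + |g i|) / |x i + g i|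

/-- cancellation factor of a residual connection, matrix version. -/
def xiRes {d n : ℕ} (X G : Fin n → Fin d → ℝ) : ℝ :=
  ⨆ p : Fin n × Fin d, (|X p.1 p.2| + |G p.1 p.2|) / |X p.1 p.2 + G p.1 p.2|

/-- positive support `Ω = supp₊(L₁(z))`. -/
def posSupp {d D : ℕ} (A1 : Matrix (Fin D) (Fin d) ℝ) (b1 : Fin D → ℝ)
    (z : Fin d → ℝ) : Finset (Fin D) :=
  Finset.univ.filter fun k => 0 < affine A1 b1 z k

/-- amplification factor ξ(M, z) of the two-layer perceptron. -/
def xiM {d D : ℕ} (A1 : Matrix (Fin D) (Fin d) ℝ) (b1 : Fin D → ℝ)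
    (A2 : Matrix (Fin d) (Fin D) ℝ) (b2 : Fin d → ℝ) (z : Fin d → ℝ) : ℝ :=
  ⨆ i : Fin d, ((∑ k ∈ posSupp A1 b1 z, |A2 i k| * ((∑ j, |A1 k j| * |z j|) + |b1 k|)) + |b2 i|) /
    |tlp A1 b1 A2 b2 z i|

/-- amplification factor ξ(S, Z) of the similarity scores. -/
def xiSim {d m : ℕ} (Wq Wk : Matrix (Fin d) (Fin d) ℝ)
    (Z : Fin (m + 1) → Fin d → ℝ) : ℝ :=
  ⨆ i, ((1 / Real.sqrt d) *
      ∑ a, (∑ b, |Wk a b| * |Z i b|) * (∑ b, |Wq a b| * |Z (Fin.last m) b|)) /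
    |simScores Wq Wk Z i|

/-- amplification factor ξ(A, Z) of the self-attention. -/
def xiAttn {d n : ℕ} (Wq Wk Wv : Matrix (Fin d) (Fin d) ℝ) (Z : Fin n → Fin d → ℝ) : ℝ :=
  ⨆ p : Fin d × Fin n,
    (∑ j : Fin (p.2.1 + 1), (∑ a, |Wv p.1 a| * |prefixCols Z p.2 j a|) *
        softmax (simScores Wq Wk (prefixCols Z p.2)) j) /
    |∑ j : Fin (p.2.1 + 1), (∑ a, Wv p.1 a * prefixCols Z p.2 j a) *
        softmax (simScores Wq Wk (prefixCols Z p.2)) j|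

/-!
Agreement of two reals up to a factor `exp ε` is preserved by sums, and the exponents `ε` add up
under composition and under quotients. One rounding costs `v = -log (1 - u)`. The computed softmax
therefore differs from the exact one at the same argument by `v` (exponential in the numerator),
`v` (exponentials in the denominator), `n * v` (summation) and `v` (division), while moving the
argument by at most `a` in each entry costs `a` in the numerator and `a` in the denominator.
Finally `v = u + O(u ^ 2)` and `exp T - 1 = T + O(T ^ 2)`.
-/

/-- `a` and `b` agree up to a factor `exp ε`; for positive reals this says
`|log a - log b| ≤ ε`. It measures accumulated relative errors without remainder terms. -/
def LogClose (ε a b : ℝ) : Prop := a ≤ Real.exp ε * b ∧ b ≤ Real.exp ε * a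

namespace LogClose

variable {ε δ a b c d : ℝ}

lemma pos_left (h : LogClose ε a b) (hb : 0 < b) : 0 < a :=
  pos_of_mul_pos_right (hb.trans_le h.2) (Real.exp_pos ε).le

lemma nonneg_left (h : LogClose ε a b) (hb : 0 ≤ b) : 0 ≤ a :=
  nonneg_of_mul_nonneg_right (hb.trans h.2) (Real.exp_pos ε)

lemma rfl_of_nonneg (hε : 0 ≤ ε) (ha : 0 ≤ a) : LogClose ε a a :=
  have h : a ≤ Real.exp ε * a := le_mul_of_one_le_left ha (Real.one_le_exp hε)
  ⟨h, h⟩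

lemma exp_of_abs_sub_le (h : |a - b| ≤ ε) : LogClose ε (Real.exp a) (Real.exp b) := by
  obtain ⟨hba, hab⟩ := abs_sub_le_iff.mp h
  constructor <;> rw [← Real.exp_add] <;> gcongr <;> linarith

lemma trans (hab : LogClose ε a b) (hbc : LogClose δ b c) : LogClose (ε + δ) a c := by
  constructor
  · calc a ≤ Real.exp ε * b := hab.1
      _ ≤ Real.exp ε * (Real.exp δ * c) := by gcongr; exact hbc.1
      _ = Real.exp (ε + δ) * c := by rw [Real.exp_add, mul_assoc]
  · calc c ≤ Real.exp δ * b := hbc.2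
      _ ≤ Real.exp δ * (Real.exp ε * a) := by gcongr; exact hab.2
      _ = Real.exp (ε + δ) * a := by rw [Real.exp_add]; ring

lemma add (hab : LogClose ε a b) (hcd : LogClose ε c d) : LogClose ε (a + c) (b + d) :=
  ⟨by linarith [hab.1, hcd.1], by linarith [hab.2, hcd.2]⟩

lemma sum {ι : Type*} {t : Finset ι} {f g : ι → ℝ} (h : ∀ i ∈ t, LogClose ε (f i) (g i)) :
    LogClose ε (∑ i ∈ t, f i) (∑ i ∈ t, g i) := by
  simp only [LogClose, Finset.mul_sum]
  exact ⟨Finset.sum_le_sum fun i hi => (h i hi).1, Finset.sum_le_sum fun i hi => (h i hi).2⟩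

lemma div (hab : LogClose ε a b) (hcd : LogClose δ c d) (hb : 0 ≤ b) (hd : 0 < d) :
    LogClose (ε + δ) (a / c) (b / d) := by
  have ha := hab.nonneg_left hb
  have hc := hcd.pos_left hd
  constructor
  · rw [Real.exp_add, ← mul_div_assoc, div_le_div_iff₀ hc hd]
    calc a * d ≤ (Real.exp ε * b) * (Real.exp δ * c) :=
          mul_le_mul hab.1 hcd.2 hd.le (by positivity)
      _ = Real.exp ε * Real.exp δ * b * c := by ring
  · rw [Real.exp_add, ← mul_div_assoc, div_le_div_iff₀ hd hc]
    calc b * c ≤ (Real.exp ε * a) * (Real.exp δ * d) :=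
          mul_le_mul hab.2 hcd.1 hc.le (by positivity)
      _ = Real.exp ε * Real.exp δ * a * d := by ring

lemma abs_sub_le (h : LogClose ε a b) (hb : 0 ≤ b) : |a - b| ≤ (Real.exp ε - 1) * b := by
  have lower : Real.exp (-ε) * b ≤ a := by
    rw [Real.exp_neg, inv_mul_le_iff₀ (Real.exp_pos ε)]
    exact h.2
  have cosh_ge_one : 2 ≤ Real.exp ε + Real.exp (-ε) := by
    linarith [Real.one_le_cosh ε, Real.cosh_eq ε]
  rw [abs_sub_le_iff]
  constructor
  · linarith [h.1]
  · nlinarith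

end LogClose

section ComponentwiseDistance

variable {d : ℕ} {x y : Fin d → ℝ}

lemma rhoV_le_ofReal_iff {c : ℝ} (hc : 0 ≤ c) :
    rhoV x y ≤ ENNReal.ofReal c ↔ ∀ i, |x i - y i| ≤ c * |y i| := by
  refine iSup_le_iff.trans (forall_congr' fun i => ?_)
  by_cases hy : y i = 0
  · by_cases hx : x i = 0 <;> simp [hx, hy]
  · rw [if_neg hy, ENNReal.ofReal_le_ofReal_iff hc, div_le_iff₀ (abs_pos.mpr hy)]

lemma abs_sub_le_rhoV_mul (h : rhoV x y ≠ ⊤) (i : Fin d) :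
    |x i - y i| ≤ (rhoV x y).toReal * |y i| :=
  (rhoV_le_ofReal_iff ENNReal.toReal_nonneg).mp (ENNReal.ofReal_toReal h).ge i

lemma rhoV_le_of_logClose {ε : ℝ} (hε : 0 ≤ ε) (hy : ∀ i, 0 ≤ y i)
    (h : ∀ i, LogClose ε (x i) (y i)) : rhoV x y ≤ ENNReal.ofReal (Real.exp ε - 1) := by
  refine (rhoV_le_ofReal_iff (sub_nonneg.mpr (Real.one_le_exp hε))).mpr fun i => ?_
  rw [abs_of_nonneg (hy i)]
  exact (h i).abs_sub_le (hy i)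

lemma abs_le_linf (x : Fin d → ℝ) (i : Fin d) : |x i| ≤ linf x :=
  le_ciSup (f := fun i => |x i|) (Set.finite_range _).bddAbove i

lemma linf_nonneg (x : Fin d → ℝ) : 0 ≤ linf x := Real.iSup_nonneg fun i => abs_nonneg (x i)

end ComponentwiseDistance

section Softmax

variable {m : ℕ} {s t : Fin m → ℝ}

lemma sum_exp_pos (s : Fin m → ℝ) (i : Fin m) : 0 < ∑ j, Real.exp (s j) :=
  Finset.sum_pos (fun j _ => Real.exp_pos (s j)) ⟨i, Finset.mem_univ i⟩

lemma softmax_nonneg (s : Fin m → ℝ) (i : Fin m) : 0 ≤ softmax s i :=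
  div_nonneg (Real.exp_pos _).le (sum_exp_pos s i).le

lemma logClose_softmax {a : ℝ} (h : ∀ i, |s i - t i| ≤ a) (i : Fin m) :
    LogClose (2 * a) (softmax s i) (softmax t i) := by
  have h_exp (j : Fin m) : LogClose a (Real.exp (s j)) (Real.exp (t j)) :=
    .exp_of_abs_sub_le (h j)
  rw [two_mul]
  exact (h_exp i).div (.sum fun j _ => h_exp j) (Real.exp_pos _).le (sum_exp_pos t i)

end Softmax

/-- The cost `-log (1 - u)` of one rounding, as an exponent for `LogClose`: the factors `1 + δ` with
`|δ| ≤ u < 1` lie between `exp (-logRoundoff u)` and `exp (logRoundoff u)`. -/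
def logRoundoff (u : ℝ) : ℝ := -Real.log (1 - u)

section Rounding

variable {u : ℝ}

lemma exp_logRoundoff (hu : u < 1) : Real.exp (logRoundoff u) = (1 - u)⁻¹ := by
  rw [logRoundoff, Real.exp_neg, Real.exp_log (sub_pos.mpr hu)]

lemma logRoundoff_nonneg (hu₀ : 0 ≤ u) (hu₁ : u < 1) : 0 ≤ logRoundoff u :=
  neg_nonneg.mpr (Real.log_nonpos (by linarith) (by linarith))

lemma logRoundoff_le (hu : u ≤ 1 / 2) : logRoundoff u ≤ u + 2 * u ^ 2 := by
  have h_pos : 0 < 1 - u := by linarith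
  calc logRoundoff u ≤ (1 - u)⁻¹ - 1 := by
        rw [logRoundoff]
        linarith [Real.one_sub_inv_le_log_of_pos h_pos]
    _ ≤ u + 2 * u ^ 2 := by
        rw [sub_le_iff_le_add, inv_le_iff_one_le_mul₀ h_pos]
        nlinarith [mul_nonneg (sq_nonneg u) (by linarith : 0 ≤ 1 - 2 * u)]

lemma Fp.logClose {a b : ℝ} (h : Fp u a b) (hu : u < 1) (hb : 0 ≤ b) :
    LogClose (logRoundoff u) a b := by
  obtain ⟨δ, hδ, rfl⟩ := h
  obtain ⟨hδ_lower, hδ_upper⟩ := abs_le.mp hδ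
  have h_pos : 0 < 1 - u := sub_pos.mpr hu
  rw [LogClose, exp_logRoundoff hu, le_inv_mul_iff₀ h_pos, le_inv_mul_iff₀ h_pos]
  constructor
  · have h_factor : (1 - u) * (1 + δ) ≤ 1 := by
      nlinarith [mul_le_mul_of_nonneg_left hδ_upper h_pos.le, sq_nonneg u]
    calc (1 - u) * (b * (1 + δ)) = ((1 - u) * (1 + δ)) * b := by ring
      _ ≤ b := mul_le_of_le_one_left hb h_factor
  · rw [mul_comm]
    exact mul_le_mul_of_nonneg_left (by linarith) hb

lemma FlSumL.logClose {l : List ℝ} {t : ℝ} (h : FlSumL u l t) (hu₀ : 0 ≤ u) (hu₁ : u < 1)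
    (hl : ∀ x ∈ l, 0 ≤ x) : LogClose (l.length * logRoundoff u) t l.sum := by
  have hv := logRoundoff_nonneg hu₀ hu₁
  induction h with
  | nil => simp [LogClose]
  | single x =>
    rw [List.sum_singleton]
    exact .rfl_of_nonneg (by positivity) (hl x (List.mem_singleton_self x))
  | cons x y l s r _ hr ih =>
    obtain ⟨hx, hyl⟩ := List.forall_mem_cons.mp hl
    have hs := ih hyl
    have hs_nonneg : 0 ≤ s := hs.nonneg_left (List.sum_nonneg hyl)
    have h_add : LogClose ((y :: l).length * logRoundoff u) (x + s) (x + (y :: l).sum) :=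
      (LogClose.rfl_of_nonneg (by positivity) hx).add hs
    rw [List.length_cons, Nat.cast_succ, add_one_mul, add_comm, List.sum_cons]
    exact (hr.logClose hu₁ (add_nonneg hx hs_nonneg)).trans h_add

lemma FlSum.logClose {m : ℕ} {f : Fin m → ℝ} {t : ℝ} (h : FlSum u f t) (hu₀ : 0 ≤ u)
    (hu₁ : u < 1) (hf : ∀ i, 0 ≤ f i) : LogClose (m * logRoundoff u) t (∑ i, f i) := by
  simpa only [List.length_ofFn, List.sum_ofFn] using
    FlSumL.logClose h hu₀ hu₁ (List.forall_mem_ofFn_iff.mpr hf)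

lemma FlSoftmax.logClose {m : ℕ} {s r : Fin m → ℝ} (h : FlSoftmax u s r) (hu₀ : 0 ≤ u)
    (hu₁ : u < 1) (i : Fin m) : LogClose ((m + 3) * logRoundoff u) (r i) (softmax s i) := by
  obtain ⟨ex, hex, tot, htot, hr⟩ := h
  have h_num (j : Fin m) : LogClose (logRoundoff u) (ex j) (Real.exp (s j)) :=
    (hex j).logClose hu₁ (Real.exp_pos _).le
  have ex_nonneg (j : Fin m) : 0 ≤ ex j := (h_num j).nonneg_left (Real.exp_pos _).le
  have h_den : LogClose (m * logRoundoff u + logRoundoff u) tot (∑ j, Real.exp (s j)) :=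
    (htot.logClose hu₀ hu₁ ex_nonneg).trans (.sum fun j _ => h_num j)
  have h_quot : LogClose (logRoundoff u + (m * logRoundoff u + logRoundoff u))
      (ex i / tot) (softmax s i) :=
    (h_num i).div h_den (Real.exp_pos _).le (sum_exp_pos s i)
  have h_div := (hr i).logClose hu₁ (h_quot.nonneg_left (softmax_nonneg s i))
  convert h_div.trans h_quot using 1
  ring

end Rounding

lemma exp_sub_one_le_add_exp_mul_sq {x y : ℝ} (hx : 0 ≤ x) (hxy : x ≤ y) :
    Real.exp x - 1 ≤ x + Real.exp y * x ^ 2 := by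
  have h_first : Real.exp x - 1 ≤ x * Real.exp x := by
    have h := mul_le_mul_of_nonneg_right (Real.one_sub_le_exp_neg x) (Real.exp_pos x).le
    rw [← Real.exp_add, neg_add_cancel, Real.exp_zero] at h
    linarith
  calc Real.exp x - 1 ≤ x * Real.exp x := h_first
    _ ≤ x + Real.exp x * x ^ 2 := by nlinarith
    _ ≤ x + Real.exp y * x ^ 2 := by gcongr

lemma exists_exp_logRoundoff_sub_one_le {a b : ℝ} (ha : 0 ≤ a) (hb : 0 ≤ b) (β : ℝ) :
    ∃ C, ∀ u ρ : ℝ, 0 ≤ u → u ≤ 1 / 2 → 0 ≤ ρ → ρ ≤ β →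
      Real.exp (b * logRoundoff u + a * ρ) - 1 ≤ b * u + a * ρ + C * (u ^ 2 + ρ ^ 2) := by
  set K := Real.exp (b + a * β)
  refine ⟨2 * b + K * (2 * ((2 * b) ^ 2 + a ^ 2)), fun u ρ hu₀ hu hρ₀ hρ => ?_⟩
  have hv₀ : 0 ≤ logRoundoff u := logRoundoff_nonneg hu₀ (by linarith)
  have hv : logRoundoff u ≤ u + 2 * u ^ 2 := logRoundoff_le hu
  have hv_two : logRoundoff u ≤ 2 * u := by nlinarith
  set T := b * logRoundoff u + a * ρ
  have hT₀ : 0 ≤ T := by positivity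
  have hT_bdd : T ≤ b + a * β :=
    add_le_add (mul_le_of_le_one_right hb (by linarith)) (mul_le_mul_of_nonneg_left hρ ha)
  have hT_first : T ≤ b * u + a * ρ + 2 * b * u ^ 2 := by
    have := mul_le_mul_of_nonneg_left hv hb
    linarith
  have hT_two : T ≤ b * (2 * u) + a * ρ :=
    add_le_add_left (mul_le_mul_of_nonneg_left hv_two hb) _
  have hT_sq : T ^ 2 ≤ 2 * ((2 * b) ^ 2 + a ^ 2) * (u ^ 2 + ρ ^ 2) :=
    calc T ^ 2 ≤ (b * (2 * u) + a * ρ) ^ 2 := pow_le_pow_left₀ hT₀ hT_two 2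
      _ ≤ 2 * ((b * (2 * u)) ^ 2 + (a * ρ) ^ 2) := add_sq_le
      _ ≤ 2 * ((2 * b) ^ 2 + a ^ 2) * (u ^ 2 + ρ ^ 2) := by
          nlinarith [sq_nonneg (a * u), sq_nonneg (b * ρ)]
  calc Real.exp T - 1 ≤ T + K * T ^ 2 := exp_sub_one_le_add_exp_mul_sq hT₀ hT_bdd
    _ ≤ (b * u + a * ρ + 2 * b * u ^ 2)
          + K * (2 * ((2 * b) ^ 2 + a ^ 2) * (u ^ 2 + ρ ^ 2)) := by gcongr
    _ ≤ b * u + a * ρ + (2 * b + K * (2 * ((2 * b) ^ 2 + a ^ 2))) * (u ^ 2 + ρ ^ 2) := by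
        nlinarith [mul_nonneg hb (sq_nonneg ρ)]

/-- rounding error of the softmax at a perturbed argument. -/
theorem softmax_perturbed {n : ℕ} (s : Fin n → ℝ) (hs : s ≠ 0) (β : ℝ) (hβ : 0 < β) :
    ∃ C u0 : ℝ, 0 < u0 ∧ ∀ u : ℝ, 0 < u → u ≤ u0 →
      ∀ sh : Fin n → ℝ, rhoV sh s ≤ ENNReal.ofReal β →
      ∀ r : Fin n → ℝ, FlSoftmax u sh r →
        rhoV r (softmax s) ≤ ENNReal.ofReal
          (((n : ℝ) + 3) * u + 2 * linf s * (rhoV sh s).toReal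
            + C * (u ^ 2 + (rhoV sh s).toReal ^ 2)) := by
  have hM : 0 ≤ 2 * linf s := mul_nonneg zero_le_two (linf_nonneg s)
  obtain ⟨C, hC⟩ := exists_exp_logRoundoff_sub_one_le hM (b := (n : ℝ) + 3) (by positivity) β
  refine ⟨C, 1 / 2, one_half_pos, fun u hu₀ hu sh hsh r hr => ?_⟩
  have hu₁ : u < 1 := by linarith
  set ρ := (rhoV sh s).toReal
  have hρ₀ : 0 ≤ ρ := ENNReal.toReal_nonneg
  have hρ : ρ ≤ β := ENNReal.toReal_le_of_le_ofReal hβ.le hsh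
  have h_arg (i : Fin n) : |sh i - s i| ≤ linf s * ρ := by
    rw [mul_comm]
    exact (abs_sub_le_rhoV_mul (ne_top_of_le_ne_top ENNReal.ofReal_ne_top hsh) i).trans
      (mul_le_mul_of_nonneg_left (abs_le_linf s i) hρ₀)
  have h_close (i : Fin n) :
      LogClose ((n + 3) * logRoundoff u + 2 * linf s * ρ) (r i) (softmax s i) := by
    rw [mul_assoc 2]
    exact (hr.logClose hu₀.le hu₁ i).trans (logClose_softmax h_arg i)
  have hv := logRoundoff_nonneg hu₀.le hu₁
  exact (rhoV_le_of_logClose (by positivity) (softmax_nonneg s) h_close).trans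
    (ENNReal.ofReal_le_ofReal (hC u ρ hu₀.le hu hρ₀ hρ))

end TR
end
end

section
/- Let x ∈ ℝ^d satisfy ‖c̊(x)‖_{−∞} > 2(1+u)γ_d‖x‖_∞, where c̊(x) = x − μ(x)e. Then the floating-point evaluation of the layer normalization N(x) = (x − μ(x)e)/√ν(x) satisfies, for all sufficiently small u: ρ_c( fl(N(x)), N(x) ) ≤ ( d/2 + 5 + 2‖x‖₁/‖c̊(x)‖_{−∞} ) u + C u² for a constant C independent of u. -/
open scoped BigOperators ENNReal

noncomputable section

namespace TR

/-!
Errors are measured on the logarithmic scale, where they add up under products, quotients and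
successive roundings and are halved by the square root. Recursive summation of `d` terms is the
exact sum of entries perturbed by at most `d - 1` roundings each, so the computed mean is off by
about `u * ‖x‖₁`; dividing by `‖c̊(x)‖_{-∞}` turns this into a relative precision for every entry of
the centred vector. For a sum of squares there is no cancellation, so the perturbations bound the
relative precision of the sum itself, and the square root turns `d` roundings into `d / 2`. The
total precision is an analytic function of `u` vanishing at `0`; its derivative there is the
coefficient of `u` in the bound, and Taylor's formula gives the quadratic remainder.
-/

/-- Olver's relative precision: `a` agrees with `b` up to a factor `exp t` with `|t| ≤ α`. The
logarithmic scale makes precisions add up under composition, products and quotients. -/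
def RelPrec (α a b : ℝ) : Prop := ∃ t : ℝ, |t| ≤ α ∧ a = b * Real.exp t

namespace RelPrec

variable {α β a b a' b' : ℝ}

theorem nonneg (h : RelPrec α a b) : 0 ≤ α :=
  let ⟨_, ht, _⟩ := h
  (abs_nonneg _).trans ht

theorem trans (hab : RelPrec α a b) (hbc : RelPrec β b c) : RelPrec (α + β) a c := by
  obtain ⟨s, hs, rfl⟩ := hab
  obtain ⟨t, ht, rfl⟩ := hbc
  exact ⟨s + t, (abs_add_le s t).trans (add_le_add hs ht), by rw [Real.exp_add]; ring⟩

theorem mono (hαβ : α ≤ β) (h : RelPrec α a b) : RelPrec β a b :=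
  let ⟨t, ht, hab⟩ := h
  ⟨t, ht.trans hαβ, hab⟩

theorem const_mul (c : ℝ) (h : RelPrec α a b) : RelPrec α (c * a) (c * b) := by
  obtain ⟨t, ht, rfl⟩ := h
  exact ⟨t, ht, by ring⟩

theorem mul (h : RelPrec α a b) (h' : RelPrec β a' b') : RelPrec (α + β) (a * a') (b * b') := by
  obtain ⟨s, hs, rfl⟩ := h
  obtain ⟨t, ht, rfl⟩ := h'
  exact ⟨s + t, (abs_add_le s t).trans (add_le_add hs ht), by rw [Real.exp_add]; ring⟩

theorem inv (h : RelPrec α a b) : RelPrec α a⁻¹ b⁻¹ := by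
  obtain ⟨t, ht, rfl⟩ := h
  exact ⟨-t, by rwa [abs_neg], by rw [mul_inv, Real.exp_neg]⟩

theorem div (h : RelPrec α a b) (h' : RelPrec β a' b') : RelPrec (α + β) (a / a') (b / b') := by
  simpa only [div_eq_mul_inv] using h.mul h'.inv

theorem sqrt (h : RelPrec α a b) : RelPrec (α / 2) (√a) (√b) := by
  obtain ⟨t, ht, rfl⟩ := h
  refine ⟨t / 2, ?_, ?_⟩
  · rw [abs_div, abs_two]
    gcongr
  · rw [Real.sqrt_mul' b (Real.exp_nonneg t), Real.exp_half]

theorem abs_sub_le (h : RelPrec α a b) : |a - b| ≤ (Real.exp α - 1) * |b| := by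
  obtain ⟨t, ht, rfl⟩ := h
  have hexp : |Real.exp t - 1| ≤ Real.exp α - 1 := by
    have hlower : Real.exp (-α) ≤ Real.exp t := Real.exp_le_exp.mpr (abs_le.mp ht).1
    have hupper : Real.exp t ≤ Real.exp α := Real.exp_le_exp.mpr (abs_le.mp ht).2
    rw [abs_le]
    constructor <;> linarith [Real.add_one_le_exp α, Real.add_one_le_exp (-α)]
  calc |b * Real.exp t - b| = |Real.exp t - 1| * |b| := by rw [← abs_mul]; ring_nf
    _ ≤ (Real.exp α - 1) * |b| := by gcongr

theorem iff_mem_Icc (hα : 0 ≤ α) (hb : 0 ≤ b) :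
    RelPrec α a b ↔ a ∈ Set.Icc (b * Real.exp (-α)) (b * Real.exp α) := by
  constructor
  · rintro ⟨t, ht, rfl⟩
    obtain ⟨hlower, hupper⟩ := abs_le.mp ht
    constructor <;> gcongr
  · rintro ⟨hlower, hupper⟩
    rcases hb.eq_or_lt with rfl | hb
    · exact ⟨0, by rwa [abs_zero], by linarith⟩
    · have hpos : 0 < a / b := div_pos (lt_of_lt_of_le (by positivity) hlower) hb
      refine ⟨Real.log (a / b), abs_le.mpr ⟨?_, ?_⟩, ?_⟩
      · rwa [Real.le_log_iff_exp_le hpos, le_div_iff₀' hb]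
      · rwa [Real.log_le_iff_le_exp hpos, div_le_iff₀' hb]
      · rw [Real.exp_log hpos, mul_div_cancel₀ a hb.ne']

theorem sum {ι : Type*} {s : Finset ι} (hs : s.Nonempty) {f g : ι → ℝ} (hg : ∀ i ∈ s, 0 ≤ g i)
    (h : ∀ i ∈ s, RelPrec α (f i) (g i)) : RelPrec α (∑ i ∈ s, f i) (∑ i ∈ s, g i) := by
  have hα : 0 ≤ α := let ⟨i, hi⟩ := hs; (h i hi).nonneg
  have hbounds := fun i hi => (iff_mem_Icc hα (hg i hi)).mp (h i hi)
  rw [iff_mem_Icc hα (Finset.sum_nonneg hg), Finset.sum_mul, Finset.sum_mul]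
  exact ⟨Finset.sum_le_sum fun i hi => (hbounds i hi).1,
    Finset.sum_le_sum fun i hi => (hbounds i hi).2⟩

theorem abs_sum_sub_sum_le {ι : Type*} {s : Finset ι} {f g : ι → ℝ}
    (h : ∀ i ∈ s, RelPrec α (f i) (g i)) :
    |∑ i ∈ s, f i - ∑ i ∈ s, g i| ≤ (Real.exp α - 1) * ∑ i ∈ s, |g i| := by
  rw [← Finset.sum_sub_distrib, Finset.mul_sum]
  exact (Finset.abs_sum_le_sum_abs _ s).trans (Finset.sum_le_sum fun i hi => (h i hi).abs_sub_le)

end RelPrec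

/-- The relative precision guaranteed by a relative error `δ` with `|δ| ≤ η < 1`: the worst case of
`|log (1 + δ)|` is `δ = -η`. -/
def logPrec (η : ℝ) : ℝ := -Real.log (1 - η)

theorem Fp.relPrec {u a b : ℝ} (hu : u < 1) (h : Fp u a b) : RelPrec (logPrec u) a b := by
  obtain ⟨δ, hδ, rfl⟩ := h
  obtain ⟨hδ_lower, hδ_upper⟩ := abs_le.mp hδ
  have hδ_pos : 0 < 1 + δ := by linarith
  refine ⟨Real.log (1 + δ), abs_le.mpr ⟨?_, ?_⟩, by rw [Real.exp_log hδ_pos]⟩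
  · rw [logPrec, neg_neg]
    exact Real.log_le_log (by linarith) (by linarith)
  · rw [logPrec, ← Real.log_inv]
    refine Real.log_le_log hδ_pos ?_
    rw [le_inv_comm₀ hδ_pos (by linarith), inv_eq_one_div, le_div_iff₀ hδ_pos]
    nlinarith

theorem Fp.of_abs_sub_le {u a b : ℝ} (hu : 0 ≤ u) (h : |a - b| ≤ u * |b|) : Fp u a b := by
  rcases eq_or_ne b 0 with rfl | hb
  · exact ⟨0, by rwa [abs_zero], by simpa using h⟩
  · refine ⟨(a - b) / b, ?_, by field_simp; ring⟩
    rwa [abs_div, div_le_iff₀ (abs_pos.mpr hb)]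

theorem FlSum.exists_relPrec {u : ℝ} (hu : u < 1) {n : ℕ} {f : Fin (n + 1) → ℝ} {s : ℝ}
    (h : FlSum u f s) :
    ∃ g : Fin (n + 1) → ℝ, (∀ i, RelPrec (n * logPrec u) (g i) (f i)) ∧ s = ∑ i, g i := by
  induction n generalizing s with
  | zero =>
    rw [FlSum, List.ofFn_succ, List.ofFn_zero] at h
    cases h
    exact ⟨f, fun i => ⟨0, by simp, by simp⟩, by simp⟩
  | succ n ih =>
    rw [FlSum, List.ofFn_succ, List.ofFn_succ] at h
    obtain _ | _ | ⟨_, _, _, s', _, hs', hs⟩ := h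
    obtain ⟨g, hg, rfl⟩ := ih (f := Fin.tail f) (by rwa [FlSum, List.ofFn_succ])
    obtain ⟨t, ht, rfl⟩ := hs.relPrec hu
    have hprec : 0 ≤ logPrec u := (abs_nonneg t).trans ht
    have hhead : RelPrec ((n + 1 : ℕ) * logPrec u) (f 0 * Real.exp t) (f 0) :=
      RelPrec.mono (le_mul_of_one_le_left hprec (by norm_cast; lia)) ⟨t, ht, rfl⟩
    have htail : ∀ i, RelPrec ((n + 1 : ℕ) * logPrec u) (g i * Real.exp t) (f i.succ) := fun i =>
      (RelPrec.trans ⟨t, ht, rfl⟩ (hg i)).mono (le_of_eq (by push_cast; ring))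
    refine ⟨Fin.cons (f 0 * Real.exp t) fun i => g i * Real.exp t, Fin.cases hhead htail, ?_⟩
    simp only [Fin.sum_univ_succ (n := n + 1), Fin.cons_zero, Fin.cons_succ, add_mul,
      Finset.sum_mul]

section Centring

variable {d : ℕ} {u : ℝ} {x : Fin d → ℝ}

/-- Bound for the absolute error of the floating-point mean of `x`: all `d - 1` additions and the
division perturb each entry by at most the precision of `d` roundings. -/
def meanErr (x : Fin d → ℝ) (u : ℝ) : ℝ := (Real.exp (d * logPrec u) - 1) * l1 x / d

theorem abs_flMean_sub_meanv_le [NeZero d] (hu : u < 1) {s m : ℝ} (hs : FlSum u x s)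
    (hm : Fp u m (s / d)) : |m - meanv x| ≤ meanErr x u := by
  obtain ⟨n, rfl⟩ := Nat.exists_eq_succ_of_ne_zero (NeZero.ne d)
  obtain ⟨g, hg, rfl⟩ := hs.exists_relPrec hu
  obtain ⟨t, ht, rfl⟩ := hm.relPrec hu
  have hperturb : ∀ i, RelPrec ((n + 1 : ℕ) * logPrec u) (g i * Real.exp t) (x i) := fun i => by
    convert RelPrec.trans ⟨t, ht, rfl⟩ (hg i) using 1
    push_cast
    ring
  have hsum := RelPrec.abs_sum_sub_sum_le (s := Finset.univ) fun i _ => hperturb i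
  calc |(∑ i, g i) / (n + 1 : ℕ) * Real.exp t - meanv x|
      = |∑ i, g i * Real.exp t - ∑ i, x i| / (n + 1 : ℕ) := by
        rw [← Nat.abs_cast (n + 1), ← abs_div, Nat.abs_cast, meanv, ← Finset.sum_mul, sub_div,
          div_mul_eq_mul_div]
    _ ≤ meanErr x u := by
        rw [meanErr, l1]
        gcongr

theorem lminf_nonneg (x : Fin d → ℝ) : 0 ≤ lminf x := Real.iInf_nonneg fun _ => abs_nonneg _

theorem lminf_le_abs (x : Fin d → ℝ) (i : Fin d) : lminf x ≤ |x i| :=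
  ciInf_le (Set.finite_range fun i => |x i|).bddBelow i

theorem FlCentr.relPrec (hu : u < 1) (hx : 0 < lminf (centr x))
    (hmean : meanErr x u / lminf (centr x) < 1) {c : Fin d → ℝ} (hc : FlCentr u x c) (i : Fin d) :
    RelPrec (logPrec u + logPrec (meanErr x u / lminf (centr x))) (c i) (centr x i) := by
  have : NeZero d := ⟨i.pos.ne'⟩
  obtain ⟨s, m, hs, hm, hsub⟩ := hc
  have herr := abs_flMean_sub_meanv_le hu hs hm
  have hratio : 0 ≤ meanErr x u / lminf (centr x) :=
    div_nonneg ((abs_nonneg _).trans herr) hx.le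
  refine ((hsub i).relPrec hu).trans ((Fp.of_abs_sub_le hratio ?_).relPrec hmean)
  calc |x i - m - centr x i| = |m - meanv x| := by rw [centr, abs_sub_comm]; ring_nf
    _ ≤ meanErr x u / lminf (centr x) * lminf (centr x) := by rwa [div_mul_cancel₀ _ hx.ne']
    _ ≤ meanErr x u / lminf (centr x) * |centr x i| := by
        gcongr
        exact lminf_le_abs _ i

end Centring

section Normalization

variable {d : ℕ} {u τ : ℝ} {x c : Fin d → ℝ}

theorem FlL2.relPrec [NeZero d] (hu : u < 1) (hc : ∀ i, RelPrec τ (c i) (x i)) {r : ℝ}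
    (hr : FlL2 u c r) : RelPrec (τ + (d / 2 + 1) * logPrec u) r (l2 x) := by
  obtain ⟨n, rfl⟩ := Nat.exists_eq_succ_of_ne_zero (NeZero.ne d)
  obtain ⟨sq, hsq, s, hs, hsqrt⟩ := hr
  obtain ⟨g, hg, rfl⟩ := hs.exists_relPrec hu
  have hsum : RelPrec (n * logPrec u + (logPrec u + (τ + τ))) (∑ i, g i) (∑ i, x i ^ 2) := by
    refine RelPrec.sum Finset.univ_nonempty (fun i _ => sq_nonneg (x i)) fun i _ => ?_
    rw [pow_two]
    exact (hg i).trans (((hsq i).relPrec hu).trans ((hc i).mul (hc i)))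
  refine RelPrec.mono (le_of_eq ?_) ((hsqrt.relPrec hu).trans hsum.sqrt)
  push_cast
  ring

theorem FlRMS.relPrec (hu : u < 1) (hc : ∀ i, RelPrec τ (c i) (x i)) {r : Fin d → ℝ}
    (hr : FlRMS u c r) (i : Fin d) :
    RelPrec (2 * τ + (d / 2 + 3) * logPrec u) (r i) (rmsN x i) := by
  have : NeZero d := ⟨i.pos.ne'⟩
  obtain ⟨nrm, hnrm, hdiv⟩ := hr
  obtain ⟨t, ht, hri⟩ := hdiv i
  have hnum := (ht.relPrec hu).trans ((hc i).const_mul √d)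
  exact ((hri.relPrec hu).trans (hnum.div (hnrm.relPrec hu hc))).mono (le_of_eq (by ring))

/-- Relative precision of the floating-point layer normalization: the centred vector enters twice,
through the numerator and through the norm. Meaningful only for `0 < lminf (centr x)`. -/
def layerNPrec (x : Fin d → ℝ) (u : ℝ) : ℝ :=
  2 * logPrec (meanErr x u / lminf (centr x)) + (d / 2 + 5) * logPrec u

theorem FlLN.relPrec (hu : u < 1) (hx : 0 < lminf (centr x))
    (hmean : meanErr x u / lminf (centr x) < 1) {r : Fin d → ℝ} (hr : FlLN u x r) (i : Fin d) :
    RelPrec (layerNPrec x u) (r i) (layerN x i) := by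
  obtain ⟨c, hc, hrms⟩ := hr
  refine (hrms.relPrec hu (hc.relPrec hu hx hmean) i).mono (le_of_eq ?_)
  rw [layerNPrec]
  ring

theorem rhoV_le_of_forall_relPrec {α : ℝ} (h : ∀ i, RelPrec α (c i) (x i)) :
    rhoV c x ≤ ENNReal.ofReal (Real.exp α - 1) := by
  refine iSup_le fun i => ?_
  have herr := (h i).abs_sub_le
  split_ifs with hx hc
  · exact zero_le
  · rw [hx, sub_zero, abs_zero, mul_zero, abs_nonpos_iff] at herr
    exact absurd herr hc
  · exact ENNReal.ofReal_le_ofReal ((div_le_iff₀ (abs_pos.mpr hx)).mpr herr)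

end Normalization

section SmallRoundoff

open Asymptotics Filter Topology

theorem isBigO_sub_linear_of_analyticAt {𝕜 F : Type*} [NontriviallyNormedField 𝕜]
    [NormedAddCommGroup F] [NormedSpace 𝕜 F] {f : 𝕜 → F} {f' : F} {a : 𝕜} (hf : AnalyticAt 𝕜 f a)
    (hf' : HasDerivAt f f' a) :
    (fun h => f (a + h) - (f a + h • f')) =O[𝓝 0] fun h => ‖h‖ ^ 2 := by
  obtain ⟨p, hp⟩ := hf
  have hcoeff : p.coeff 1 = f' := hp.hasDerivAt.unique hf'
  have hvalue : p.coeff 0 = f a := hp.coeff_zero _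
  have htaylor := hp.isBigO_sub_partialSum_pow 2
  simpa [FormalMultilinearSeries.partialSum, Finset.sum_range_succ, hvalue, hcoeff] using htaylor

variable {d : ℕ} (x : Fin d → ℝ)

theorem logPrec_zero : logPrec 0 = 0 := by simp [logPrec]

theorem analyticAt_logPrec {η : ℝ} (hη : η < 1) : AnalyticAt ℝ logPrec η :=
  ((analyticAt_const.sub analyticAt_id).log (sub_pos.mpr hη)).neg

theorem hasDerivAt_logPrec {η : ℝ} (hη : η ≠ 1) : HasDerivAt logPrec (1 - η)⁻¹ η :=
  ((((hasDerivAt_id η).const_sub 1).log (sub_ne_zero.mpr hη.symm)).neg).congr_deriv (by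
    rw [neg_div, neg_neg, one_div, id])

theorem hasDerivAt_logPrec_zero : HasDerivAt logPrec 1 0 := by
  simpa only [sub_zero, inv_one] using hasDerivAt_logPrec (zero_ne_one' ℝ)

theorem meanErr_zero : meanErr x 0 = 0 := by simp [meanErr, logPrec_zero]

theorem analyticAt_meanErr_zero : AnalyticAt ℝ (meanErr x) 0 := by
  unfold meanErr
  have := analyticAt_logPrec (zero_lt_one' ℝ)
  fun_prop

theorem hasDerivAt_meanErr_zero [NeZero d] : HasDerivAt (meanErr x) (l1 x) 0 := by
  have hd : (d : ℝ) ≠ 0 := NeZero.ne _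
  refine (((((hasDerivAt_logPrec_zero.const_mul (d : ℝ)).exp).sub_const 1).mul_const
    (l1 x)).div_const (d : ℝ)).congr_deriv ?_
  simp only [logPrec_zero, mul_zero, Real.exp_zero]
  field_simp

theorem layerNPrec_zero : layerNPrec x 0 = 0 := by
  simp [layerNPrec, meanErr_zero, logPrec_zero]

theorem analyticAt_layerNPrec_zero : AnalyticAt ℝ (layerNPrec x) 0 := by
  have hratio : AnalyticAt ℝ (fun u => logPrec (meanErr x u / lminf (centr x))) 0 :=
    (analyticAt_logPrec (by simp [meanErr_zero])).fun_comp (analyticAt_meanErr_zero x).div_const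
  exact (analyticAt_const.mul hratio).add
    (analyticAt_const.mul (analyticAt_logPrec zero_lt_one))

theorem hasDerivAt_layerNPrec_zero [NeZero d] :
    HasDerivAt (layerNPrec x) (d / 2 + 5 + 2 * l1 x / lminf (centr x)) 0 := by
  have hratio : HasDerivAt (fun u => logPrec (meanErr x u / lminf (centr x)))
      (1 * (l1 x / lminf (centr x))) 0 :=
    HasDerivAt.comp (h₂ := logPrec) 0 (by simpa [meanErr_zero] using hasDerivAt_logPrec_zero)
      ((hasDerivAt_meanErr_zero x).div_const _)
  exact ((hratio.const_mul 2).add (hasDerivAt_logPrec_zero.const_mul ((d : ℝ) / 2 + 5))).congr_deriv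
    (by ring)

theorem exists_eventually_exp_layerNPrec_sub_one_le [NeZero d] :
    ∃ C, ∀ᶠ u in 𝓝 0, Real.exp (layerNPrec x u) - 1 ≤
      (d / 2 + 5 + 2 * l1 x / lminf (centr x)) * u + C * u ^ 2 := by
  have hderiv := (hasDerivAt_layerNPrec_zero x).exp
  rw [layerNPrec_zero, Real.exp_zero, one_mul] at hderiv
  obtain ⟨C, hC⟩ :=
    (isBigO_sub_linear_of_analyticAt (analyticAt_layerNPrec_zero x).rexp' hderiv).bound
  refine ⟨C, hC.mono fun u hu => ?_⟩
  simp only [zero_add, layerNPrec_zero, Real.exp_zero, smul_eq_mul, Real.norm_eq_abs, abs_pow,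
    sq_abs] at hu
  linarith [(abs_le.mp hu).2]

theorem exists_eventually_rhoV_layerN_le {x : Fin d → ℝ} (hx : 0 < lminf (centr x)) :
    ∃ C, ∀ᶠ u in 𝓝 0, ∀ r, FlLN u x r → rhoV r (layerN x) ≤
      ENNReal.ofReal ((d / 2 + 5 + 2 * l1 x / lminf (centr x)) * u + C * u ^ 2) := by
  have : NeZero d := ⟨by rintro rfl; simp [lminf] at hx⟩
  obtain ⟨C, hC⟩ := exists_eventually_exp_layerNPrec_sub_one_le x
  have hsmall : ∀ᶠ u in 𝓝 0, meanErr x u / lminf (centr x) < 1 :=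
    ((analyticAt_meanErr_zero x).continuousAt.div_const _).eventually_lt_const
      (by simp [meanErr_zero])
  refine ⟨C, ?_⟩
  filter_upwards [hC, hsmall, gt_mem_nhds one_pos] with u hbound hmean hu r hr
  exact (rhoV_le_of_forall_relPrec (hr.relPrec hu hx hmean)).trans
    (ENNReal.ofReal_le_ofReal hbound)

theorem eventually_gam_nonneg (k : ℕ) : ∀ᶠ u in 𝓝[>] 0, 0 ≤ gam k u := by
  have hden : ∀ᶠ u : ℝ in 𝓝[>] 0, 0 < 1 - k * u :=
    ((by fun_prop : Continuous fun u : ℝ => 1 - k * u).continuousAt.eventually_const_lt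
      (by simp)).filter_mono nhdsWithin_le_nhds
  filter_upwards [hden, self_mem_nhdsWithin] with u hden (hu : 0 < u)
  exact div_nonneg (by positivity) hden.le

end SmallRoundoff

/-- forward rounding error of the layer normalization. -/
theorem layer_normalization_rounding {d : ℕ} (x : Fin d → ℝ) :
    ∃ C u0 : ℝ, 0 < u0 ∧ ∀ u : ℝ, 0 < u → u ≤ u0 →
      lminf (centr x) > 2 * (1 + u) * gam d u * linf x →
      ∀ r : Fin d → ℝ, FlLN u x r →
        rhoV r (layerN x) ≤ ENNReal.ofReal
          (((d : ℝ) / 2 + 5 + 2 * l1 x / lminf (centr x)) * u + C * u ^ 2) := by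
  rcases (lminf_nonneg (centr x)).eq_or_lt with hzero | hpos
  · -- A vanishing entry of `centr x` contradicts the separation hypothesis once `d * u < 1`.
    obtain ⟨u₀, hu₀, hgam⟩ := mem_nhdsGT_iff_exists_Ioc_subset.mp (eventually_gam_nonneg d)
    refine ⟨0, u₀, hu₀, fun u hu huu₀ hsep => absurd hsep (not_lt.mpr ?_)⟩
    have hgam_nonneg : 0 ≤ gam d u := hgam ⟨hu, huu₀⟩
    have hlinf : 0 ≤ linf x := Real.iSup_nonneg fun _ => abs_nonneg _
    rw [← hzero]
    positivity
  · obtain ⟨C, hC⟩ := exists_eventually_rhoV_layerN_le hpos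
    obtain ⟨u₀, hu₀, hbound⟩ := mem_nhdsGT_iff_exists_Ioc_subset.mp (nhdsWithin_le_nhds hC)
    exact ⟨C, u₀, hu₀, fun u hu huu₀ _ => hbound ⟨hu, huu₀⟩⟩

end TR
end
end
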